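/- Let H be a real Hilbert space, let C ⊆ H be a nonempty closed convex set, and let f : H → ℝ be convex with a gradient map f' : H → H (f has gradient f'(x) at every x) such that f' is Lipschitz with constant L > 0 (so f' is (1/L)-cocoercive), and set β := 1/L. Suppose the set Ω := {x* ∈ C | ∀ y ∈ C, f(x*) ≤ f(y)} of minimizers of f over C is nonempty. Assume the variable-metric hypotheses of the context: operators U_k, V_k with ⟨U_k x, x⟩ ≥ α‖x‖² (α > 0), V_k∘U_k = U_k∘V_k = id, ‖U_k‖ ≤ μ, (1 + η_k)⟨U_{k+1}x, x⟩ ≥ ⟨U_k x, x⟩ with η_k ≥ 0 summable; parameters γ_k ∈ (0, 2β/‖U_k‖), α_k := 2β/(4β − γ_k‖U_k‖), λ_k with λ̲ ≤ λ_k ≤ 1/α_k − τ (λ̲, τ > 0) and γ_k ≥ γ̲ > 0; errors a_k, b_k with ∑_k λ_k‖a_k‖ < ∞, ∑_k λ_k‖b_k‖ < ∞; and projection maps P_k : H → H satisfying, for every y ∈ H, P_k y ∈ C and ⟨V_k(y − P_k y), z − P_k y⟩ ≤ 0 for all z ∈ C. Define from x_0 ∈ H the iteration x_{k+1} = x_k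 + λ_k·(P_k(x_k − γ_k·U_k(f'(x_k) + b_k)) + a_k − x_k). Then there exists p ∈ Ω such that x_k converges weakly to p, i.e., ⟨x_k, y⟩ → ⟨p, y⟩ for every y ∈ H. -/

import Mathlib

open RealInnerProductSpace Filter

section aux
variable {H : Type*} [NormedAddCommGroup H] [InnerProductSpace ℝ H]

lemma aux_psd (B : H →L[ℝ] H) (hs : ∀ z w : H, ⟪B z, w⟫ = ⟪z, B w⟫)
    (hp : ∀ z : H, 0 ≤ ⟪B z, z⟫) (K : ℝ) (hK : 0 ≤ K) (hB : ∀ z : H, ‖B z‖ ≤ K * ‖z‖) (z : H) :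
    ‖B z‖ ^ 2 ≤ K * ⟪B z, z⟫ := by
  rcases hK.eq_or_lt with h0 | h0
  · have := hB z
    rw [← h0, zero_mul] at this
    have h1 : ‖B z‖ = 0 := le_antisymm this (norm_nonneg _)
    rw [h1, ← h0]; simp
  have h := hp (K • z - B z)
  have e : ⟪B (K • z - B z), K • z - B z⟫ =
      K ^ 2 * ⟪B z, z⟫ - 2 * K * ‖B z‖ ^ 2 + ⟪B (B z), B z⟫ := by
    simp only [map_sub, map_smul, inner_sub_left, inner_sub_right, real_inner_smul_left,
      real_inner_smul_right]
    rw [hs (B z) z, real_inner_self_eq_norm_sq]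
    ring
  have h2 : ⟪B (B z), B z⟫ ≤ K * ‖B z‖ ^ 2 := by
    have := real_inner_le_norm (B (B z)) (B z)
    have h3 := mul_le_mul_of_nonneg_right (hB (B z)) (norm_nonneg (B z))
    nlinarith
  have h4 : K * ‖B z‖ ^ 2 ≤ K * (K * ⟪B z, z⟫) := by nlinarith
  exact le_of_mul_le_mul_left h4 h0

lemma aux_grad_ineq [CompleteSpace H] (f : H → ℝ) (f' : H → H) (hfconv : ConvexOn ℝ Set.univ f)
    (hfgrad : ∀ z : H, HasGradientAt f (f' z) z) (z w : H) :
    f z + ⟪f' z, w - z⟫ ≤ f w := by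
  have hline : ∀ t : ℝ, HasDerivAt (fun t : ℝ => z + t • (w - z)) (w - z) t := by
    intro t
    simpa using ((hasDerivAt_id t).smul_const (w - z)).const_add z
  have hd : HasDerivAt (fun t : ℝ => f (z + t • (w - z))) ⟪f' z, w - z⟫ 0 := by
    have h1 : HasFDerivAt f (InnerProductSpace.toDual ℝ H (f' z)) (z + (0:ℝ) • (w - z)) := by
      simpa using (hfgrad z).hasFDerivAt
    have := h1.comp_hasDerivAt (0:ℝ) (hline 0)
    simp at this
    exact this
  have hc : ConvexOn ℝ Set.univ (fun t : ℝ => f (z + t • (w - z))) := by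
    refine ⟨convex_univ, ?_⟩
    intro s _ t _ a b ha hb hab
    have := hfconv.2 (Set.mem_univ (z + s • (w - z))) (Set.mem_univ (z + t • (w - z))) ha hb hab
    convert this using 2
    simp only [smul_eq_mul]
    have : z = (a + b) • z := by rw [hab, one_smul]
    nth_rewrite 1 [this]
    module
  have := hc.le_slope_of_hasDerivAt (Set.mem_univ 0) (Set.mem_univ 1) one_pos hd
  simp [slope_def_field] at this
  linarith

lemma aux_descent [CompleteSpace H] (f : H → ℝ) (f' : H → H)
    (hfgrad : ∀ z : H, HasGradientAt f (f' z) z) (L : ℝ)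
    (hflip : ∀ z w : H, ‖f' z - f' w‖ ≤ L * ‖z - w‖) (z d : H) :
    f (z + d) ≤ f z + ⟪f' z, d⟫ + L / 2 * ‖d‖ ^ 2 := by
  have hline : ∀ t : ℝ, HasDerivAt (fun t : ℝ => z + t • d) d t := by
    intro t
    simpa using ((hasDerivAt_id t).smul_const d).const_add z
  have hd : ∀ t : ℝ, HasDerivAt (fun t : ℝ => f (z + t • d)) ⟪f' (z + t • d), d⟫ t := by
    intro t
    have := (hfgrad (z + t • d)).hasFDerivAt.comp_hasDerivAt t (hline t)
    simp at this
    exact this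
  have hφ : ∀ t : ℝ, HasDerivAt (fun t : ℝ => f (z + t • d) - t * ⟪f' z, d⟫ - t ^ 2 * (L / 2 * ‖d‖ ^ 2))
      (⟪f' (z + t • d), d⟫ - ⟪f' z, d⟫ - 2 * t * (L / 2 * ‖d‖ ^ 2)) t := by
    intro t
    have h1 := ((hasDerivAt_id t).mul_const ⟪f' z, d⟫)
    have h2 := ((hasDerivAt_pow 2 t).mul_const (L / 2 * ‖d‖ ^ 2))
    have := ((hd t).sub h1).sub h2
    simp at this
    exact this
  have hanti : AntitoneOn (fun t : ℝ => f (z + t • d) - t * ⟪f' z, d⟫ - t ^ 2 * (L / 2 * ‖d‖ ^ 2)) (Set.Icc 0 1) := by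
    apply antitoneOn_of_deriv_nonpos (convex_Icc 0 1)
    · intro t _; exact (hφ t).continuousAt.continuousWithinAt
    · intro t _; exact (hφ t).differentiableAt.differentiableWithinAt
    · intro t ht
      rw [interior_Icc] at ht
      rw [(hφ t).deriv, ← inner_sub_left]
      have h1 := real_inner_le_norm (f' (z + t • d) - f' z) d
      have h2 := hflip (z + t • d) z
      rw [add_sub_cancel_left, norm_smul, Real.norm_eq_abs, abs_of_pos ht.1] at h2
      have h3 := mul_le_mul_of_nonneg_right h2 (norm_nonneg d)
      nlinarith
  have := hanti (Set.left_mem_Icc.2 zero_le_one) (Set.right_mem_Icc.2 zero_le_one) zero_le_one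
  simp at this
  linarith

lemma aux_coco [CompleteSpace H] (f : H → ℝ) (f' : H → H) (hfconv : ConvexOn ℝ Set.univ f)
    (hfgrad : ∀ z : H, HasGradientAt f (f' z) z) (L : ℝ) (hL : 0 < L)
    (hflip : ∀ z w : H, ‖f' z - f' w‖ ≤ L * ‖z - w‖) (z w : H) :
    ‖f' z - f' w‖ ^ 2 ≤ L * ⟪f' z - f' w, z - w⟫ := by
  have key : ∀ z w : H, f z + ⟪f' z, w - z⟫ + 1 / (2 * L) * ‖f' z - f' w‖ ^ 2 ≤ f w := by
    intro z w
    have h1 := aux_descent f f' hfgrad L hflip w ((1 / L) • (f' z - f' w))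
    have h2 := aux_grad_ineq f f' hfconv hfgrad z (w + (1 / L) • (f' z - f' w))
    have e1 : w + (1 / L) • (f' z - f' w) - z = (w - z) + (1 / L) • (f' z - f' w) := by abel
    rw [e1, inner_add_right, real_inner_smul_right] at h2
    rw [real_inner_smul_right, norm_smul, Real.norm_eq_abs, abs_of_pos (by positivity)] at h1
    have e2 : ⟪f' z, f' z - f' w⟫ - ⟪f' w, f' z - f' w⟫ = ‖f' z - f' w‖ ^ 2 := by
      rw [← inner_sub_left, real_inner_self_eq_norm_sq]
    have e3 : L / 2 * (1 / L * ‖f' z - f' w‖) ^ 2 = 1 / (2 * L) * ‖f' z - f' w‖ ^ 2 := by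
      field_simp
    have e4 : 1 / (2 * L) * ‖f' z - f' w‖ ^ 2 = 1 / L * ‖f' z - f' w‖ ^ 2 - 1 / (2 * L) * ‖f' z - f' w‖ ^ 2 := by
      field_simp; ring
    rw [e3] at h1
    have e5 : 1 / L * ⟪f' z, f' z - f' w⟫ - 1 / L * ⟪f' w, f' z - f' w⟫ = 1 / L * ‖f' z - f' w‖ ^ 2 := by
      rw [← e2]; ring
    linarith
  have h1 := key z w
  have h2 := key w z
  rw [norm_sub_rev (f' w) (f' z)] at h2
  have e : ⟪f' z, w - z⟫ + ⟪f' w, z - w⟫ = - ⟪f' z - f' w, z - w⟫ := by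
    simp only [inner_sub_left, inner_sub_right]; ring
  have h3 : 1 / (2 * L) * ‖f' z - f' w‖ ^ 2 + 1 / (2 * L) * ‖f' z - f' w‖ ^ 2 ≤ ⟪f' z - f' w, z - w⟫ := by
    linarith
  have e6 : 1 / (2 * L) * ‖f' z - f' w‖ ^ 2 + 1 / (2 * L) * ‖f' z - f' w‖ ^ 2 = ‖f' z - f' w‖ ^ 2 / L := by
    field_simp; ring
  rw [e6, div_le_iff₀ hL] at h3
  linarith

lemma aux_conv (D s δ : ℕ → ℝ) (hD : ∀ k, 0 ≤ D k) (hs : ∀ k, 0 ≤ s k) (hδ : ∀ k, 0 ≤ δ k)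
    (hss : Summable s) (hδs : Summable δ) (h : ∀ k, D (k + 1) ≤ (1 + s k) * D k + δ k) :
    ∃ l, Tendsto D atTop (nhds l) := by
  have hb : ∀ k, D k ≤ Real.exp (∑ i ∈ Finset.range k, s i) * (D 0 + ∑ i ∈ Finset.range k, δ i) := by
    intro k
    induction k with
    | zero => simp
    | succ k ih =>
      have h0 := h k
      rw [Finset.sum_range_succ, Finset.sum_range_succ, Real.exp_add]
      have h1 : 1 + s k ≤ Real.exp (s k) := by linarith [Real.add_one_le_exp (s k)]
      have h2 : 1 ≤ Real.exp (∑ i ∈ Finset.range k, s i) := by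
        apply Real.one_le_exp; exact Finset.sum_nonneg fun i _ => hs i
      have h3 : 1 ≤ Real.exp (s k) := Real.one_le_exp (hs k)
      have h4 : (1 + s k) * D k ≤ Real.exp (s k) * (Real.exp (∑ i ∈ Finset.range k, s i) * (D 0 + ∑ i ∈ Finset.range k, δ i)) :=
        mul_le_mul h1 ih (hD k) (by positivity)
      have h5 : 1 * δ k ≤ (Real.exp (∑ i ∈ Finset.range k, s i) * Real.exp (s k)) * δ k := by
        apply mul_le_mul_of_nonneg_right _ (hδ k)
        nlinarith
      nlinarith
  obtain ⟨M, hM⟩ : ∃ M, ∀ k, D k ≤ M := by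
    refine ⟨Real.exp (∑' i, s i) * (D 0 + ∑' i, δ i), fun k => (hb k).trans ?_⟩
    have h1 := hss.sum_le_tsum (Finset.range k) (fun i _ => hs i)
    have h2 := hδs.sum_le_tsum (Finset.range k) (fun i _ => hδ i)
    have h3 : 0 ≤ ∑ i ∈ Finset.range k, δ i := Finset.sum_nonneg fun i _ => hδ i
    have := hD 0
    gcongr
  have hM0 : 0 ≤ M := (hD 0).trans (hM 0)
  have hts : Summable (fun k => s k * M + δ k) := (hss.mul_right M).add hδs
  have hanti : Antitone (fun k => D k - ∑ i ∈ Finset.range k, (s i * M + δ i)) := by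
    apply antitone_nat_of_succ_le
    intro k
    rw [Finset.sum_range_succ]
    have := h k
    have := mul_le_mul_of_nonneg_left (hM k) (hs k)
    linarith
  have hlb : BddBelow (Set.range (fun k => D k - ∑ i ∈ Finset.range k, (s i * M + δ i))) := by
    refine ⟨- ∑' i, (s i * M + δ i), ?_⟩
    rintro _ ⟨k, rfl⟩
    have := hts.sum_le_tsum (Finset.range k) (fun i _ => add_nonneg (mul_nonneg (hs i) hM0) (hδ i))
    have := hD k
    simp only
    linarith
  have h1 := tendsto_atTop_ciInf hanti hlb
  have h2 := hts.hasSum.tendsto_sum_nat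
  have h3 := h1.add h2
  refine ⟨_, h3.congr fun k => ?_⟩
  ring

/-- order reversal of inversion -/
lemma aux_inv (U V U' V' : H →L[ℝ] H) (hU : ∀ z w : H, ⟪U z, w⟫ = ⟪z, U w⟫)
    (hUp : ∀ z : H, 0 ≤ ⟪U z, z⟫) (hUV : ∀ z, U (V z) = z) (hUV' : ∀ z, U' (V' z) = z)
    (e : ℝ) (he : 0 ≤ e) (hm : ∀ z : H, ⟪U z, z⟫ ≤ (1 + e) * ⟪U' z, z⟫) (z : H) :
    ⟪V' z, z⟫ ≤ (1 + e) * ⟪V z, z⟫ := by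
  have h := hUp ((1 + e) • V z - V' z)
  have h1 := hm (V' z)
  rw [hUV'] at h1
  simp only [map_sub, map_smul, inner_sub_left, inner_sub_right, real_inner_smul_left,
      real_inner_smul_right, hUV] at h
  rw [hU (V' z) (V z), hUV] at h
  have c1 : ⟪z, V z⟫ = ⟪V z, z⟫ := real_inner_comm _ _
  have c2 : ⟪z, V' z⟫ = ⟪V' z, z⟫ := real_inner_comm _ _
  rw [c1, c2] at h
  rw [c2] at h1
  have h0 : 0 < 1 + e := by linarith
  have h2 : (1 + e) * ⟪V' z, z⟫ ≤ (1 + e) * ((1 + e) * ⟪V z, z⟫) := by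
    nlinarith
  exact le_of_mul_le_mul_left h2 h0

lemma aux_strong [CompleteSpace H] (V : ℕ → H →L[ℝ] H)
    (hV : ∀ k, ∀ z w : H, ⟪V k z, w⟫ = ⟪z, V k w⟫)
    (M : ℝ) (hM : 0 ≤ M) (hb : ∀ k z, ‖V k z‖ ≤ M * ‖z‖)
    (η : ℕ → ℝ) (hη0 : ∀ k, 0 ≤ η k) (hηsum : Summable η)
    (hm : ∀ k, ∀ z : H, ⟪V (k + 1) z, z⟫ ≤ (1 + η k) * ⟪V k z, z⟫) (z : H) :
    ∃ v, Tendsto (fun k => V k z) atTop (nhds v) := by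
  set S : ℕ → ℝ := fun k => ∑ i ∈ Finset.range k, η i * M with hS
  have hSsum : Summable (fun i => η i * M) := hηsum.mul_right M
  have hSt : Tendsto S atTop (nhds (∑' i, η i * M)) := hSsum.hasSum.tendsto_sum_nat
  set T := ∑' i, η i * M with hT
  have hS0 : ∀ k, 0 ≤ S k := fun k => Finset.sum_nonneg fun i _ => mul_nonneg (hη0 i) hM
  have hST : ∀ k, S k ≤ T := fun k => hSsum.sum_le_tsum _ (fun i _ => mul_nonneg (hη0 i) hM)
  have hT0 : 0 ≤ T := (hS0 0).trans (hST 0)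
  have hq : ∀ k z, |⟪V k z, z⟫| ≤ M * ‖z‖ ^ 2 := by
    intro k z
    have h1 := abs_real_inner_le_norm (V k z) z
    have := mul_le_mul_of_nonneg_right (hb k z) (norm_nonneg z)
    nlinarith
  have hanti : ∀ z, Antitone (fun k => ⟪V k z, z⟫ - S k * ‖z‖ ^ 2) := by
    intro z
    apply antitone_nat_of_succ_le
    intro k
    have h1 := hm k z
    have h2 := mul_le_mul_of_nonneg_left ((le_abs_self _).trans (hq k z)) (hη0 k)
    simp only [hS, Finset.sum_range_succ]
    linarith
  have hlim : ∃ l, Tendsto (fun k => ⟪V k z, z⟫ - S k * ‖z‖ ^ 2) atTop (nhds l) := by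
    refine ⟨_, tendsto_atTop_ciInf (hanti z) ⟨-(M * ‖z‖ ^ 2) - T * ‖z‖ ^ 2, ?_⟩⟩
    rintro _ ⟨k, rfl⟩
    have h1 := (abs_le.1 (hq k z)).1
    have h2 := mul_le_mul_of_nonneg_right (hST k) (sq_nonneg ‖z‖)
    simp only
    linarith
  obtain ⟨l, hl⟩ := hlim
  set W : ℕ → H := fun k => V k z - S k • z with hW
  have hcau : CauchySeq W := by
    have hlc := hl.cauchySeq
    rw [Metric.cauchySeq_iff'] at hlc ⊢
    intro ε hε
    obtain ⟨N, hN⟩ := hlc (ε ^ 2 / (2 * M + T + 1)) (by positivity)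
    refine ⟨N, fun n hn => ?_⟩
    have h0 := hN n hn
    let B : H →L[ℝ] H := (V N - S N • ContinuousLinearMap.id ℝ H) - (V n - S n • ContinuousLinearMap.id ℝ H)
    have hBe : ∀ z, B z = (V N z - S N • z) - (V n z - S n • z) := fun z => by simp [B]
    have hBs : ∀ z w : H, ⟪B z, w⟫ = ⟪z, B w⟫ := by
      intro z w
      simp only [hBe, inner_sub_left, inner_sub_right, real_inner_smul_left, real_inner_smul_right, hV]
    have hBq : ∀ z, ⟪B z, z⟫ = (⟪V N z, z⟫ - S N * ‖z‖ ^ 2) - (⟪V n z, z⟫ - S n * ‖z‖ ^ 2) := by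
      intro z
      simp only [hBe, inner_sub_left, real_inner_smul_left, real_inner_self_eq_norm_sq]
    have hBp : ∀ z : H, 0 ≤ ⟪B z, z⟫ := by
      intro z
      rw [hBq]
      have := hanti z hn
      simp only at this
      linarith
    have hSm : S N ≤ S n := Finset.sum_le_sum_of_subset_of_nonneg (Finset.range_mono hn) (fun i _ _ => mul_nonneg (hη0 i) hM)
    have hBb : ∀ z, ‖B z‖ ≤ (2 * M + T + 1) * ‖z‖ := by
      intro z
      have e : B z = V N z - V n z + (S n - S N) • z := by rw [hBe]; module
      rw [e]
      have h1 := norm_add_le (V N z - V n z) ((S n - S N) • z)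
      have h2 := norm_sub_le (V N z) (V n z)
      rw [norm_smul, Real.norm_eq_abs, abs_of_nonneg (by linarith)] at h1
      have h3 : (S n - S N) * ‖z‖ ≤ T * ‖z‖ := by
        apply mul_le_mul_of_nonneg_right _ (norm_nonneg _)
        linarith [hST n, hS0 N]
      have := hb N z
      have := hb n z
      have := norm_nonneg z
      linarith
    have h3 := aux_psd B hBs hBp (2 * M + T + 1) (by positivity) hBb z
    rw [Real.dist_eq, abs_sub_comm] at h0
    have h4 := (le_abs_self _).trans_lt h0
    have h5 : ⟪B z, z⟫ < ε ^ 2 / (2 * M + T + 1) := by rw [hBq]; exact h4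
    rw [lt_div_iff₀ (by positivity)] at h5
    have h6 : ‖B z‖ ^ 2 < ε ^ 2 := by linarith
    have h7 := lt_of_pow_lt_pow_left₀ 2 hε.le h6
    rw [dist_comm, dist_eq_norm]
    simpa only [hW, hBe] using h7
  obtain ⟨w, hw⟩ := cauchySeq_tendsto_of_complete hcau
  have := hw.add (hSt.smul_const z)
  refine ⟨_, this.congr fun k => ?_⟩
  simp [hW]

lemma aux_weak_cpt [CompleteSpace H] (x : ℕ → H) (R : ℝ) (hR : ∀ k, ‖x k‖ ≤ R) (F : Ultrafilter ℕ) :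
    ∃ p : H, ∀ y, Tendsto (fun k => ⟪x k, y⟫) F (nhds ⟪p, y⟫) := by
  let φ : ℕ → WeakDual ℝ H := fun k => StrongDual.toWeakDual (InnerProductSpace.toDual ℝ H (x k))
  have hc := WeakDual.isCompact_closedBall (𝕜 := ℝ) (E := H) 0 R
  obtain ⟨g, _, hg⟩ := hc.ultrafilter_le_nhds (F.map φ) (by
    rw [le_principal_iff]
    change φ ⁻¹' _ ∈ F
    apply Filter.univ_mem'
    intro k
    simp [φ]
    exact hR k)
  refine ⟨(InnerProductSpace.toDual ℝ H).symm (WeakDual.toStrongDual g), fun y => ?_⟩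
  have h1 : Tendsto φ F (nhds g) := hg
  have h2 := (WeakDual.eval_continuous (𝕜 := ℝ) (E := H) y).tendsto g
  have h3 := h2.comp h1
  rw [InnerProductSpace.toDual_symm_apply]
  exact h3

lemma aux_step (U V : H →L[ℝ] H) (hVs : ∀ z w : H, ⟪V z, w⟫ = ⟪z, V w⟫)
    (hVU : ∀ z, V (U z) = z) (u : ℝ) (hu : ∀ z, ‖z‖ ^ 2 ≤ u * ⟪V z, z⟫)
    (L γ l τ l0 : ℝ) (hL : 0 < L) (hγ : 0 < γ) (hl0 : 0 < l0) (hτ : 0 < τ) (hl : l0 ≤ l)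
    (hl2 : l ≤ 2 - γ * u * L / 2 - τ) (x q p g gs : H) (hV0 : 0 ≤ ⟪V (x - q), x - q⟫)
    (hproj : ⟪V (x - γ • U g - q), p - q⟫ ≤ 0) (hopt : 0 ≤ ⟪gs, q - p⟫)
    (hco : ‖g - gs‖ ^ 2 ≤ L * ⟪g - gs, x - p⟫) :
    ⟪V (x + l • (q - x) - p), x + l • (q - x) - p⟫ ≤ ⟪V (x - p), x - p⟫ - l0 * τ * ⟪V (x - q), x - q⟫ := by
  have e1 : V (x - γ • U g - q) = V (x - q) - γ • g := by
    simp only [map_sub, map_smul, hVU]; abel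
  rw [e1, inner_sub_left, real_inner_smul_left] at hproj
  have e2 : ⟪g, p - q⟫ = ⟪g - gs, x - q⟫ - ⟪g - gs, x - p⟫ - ⟪gs, q - p⟫ := by
    simp only [inner_sub_left, inner_sub_right]; ring
  have e3 : ⟪V (x - q), p - q⟫ = ⟪V (x - q), x - q⟫ - ⟪V (x - q), x - p⟫ := by
    simp only [inner_sub_right]; ring
  have e4 : ⟪V (x + l • (q - x) - p), x + l • (q - x) - p⟫ =
      ⟪V (x - p), x - p⟫ - 2 * l * ⟪V (x - q), x - p⟫ + l ^ 2 * ⟪V (x - q), x - q⟫ := by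
    have : x + l • (q - x) - p = (x - p) - l • (x - q) := by module
    rw [this]
    generalize x - p = A
    generalize x - q = B
    simp only [map_sub, map_smul, inner_sub_left, inner_sub_right, real_inner_smul_left,
      real_inner_smul_right]
    rw [hVs A B, real_inner_comm A (V B)]
    ring
  rw [e4]
  set s := ⟪V (x - q), x - q⟫
  set w := ⟪V (x - q), x - p⟫
  have h1 : ⟪g - gs, x - q⟫ ≤ ‖g - gs‖ * ‖x - q‖ := real_inner_le_norm _ _
  have h2 := hu (x - q)
  have h3 : L * (⟪g - gs, x - q⟫ - ⟪g - gs, x - p⟫) ≤ L * (L / 4 * (u * s)) := by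
    have : L * (L / 4 * ‖x - q‖ ^ 2) ≤ L * (L / 4 * (u * s)) := by gcongr
    nlinarith [sq_nonneg (‖g - gs‖ - L / 2 * ‖x - q‖)]
  have h4 := le_of_mul_le_mul_left h3 hL
  have h5 : γ * ⟪g, p - q⟫ ≤ γ * (L / 4 * (u * s)) := by
    apply mul_le_mul_of_nonneg_left _ hγ.le
    linarith
  have h6 : s - γ * (L / 4 * (u * s)) ≤ w := by linarith
  have hl' : 0 < l := by linarith
  have h7 : 2 * l * (s - γ * (L / 4 * (u * s))) ≤ 2 * l * w := by gcongr
  have h8 : l0 * τ * s ≤ l * (2 - γ * u * L / 2 - l) * s := by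
    apply mul_le_mul_of_nonneg_right _ hV0
    apply mul_le_mul hl (by linarith) hτ.le hl'.le
  nlinarith

end aux

lemma aux_opt {H : Type*} [NormedAddCommGroup H] [InnerProductSpace ℝ H] [CompleteSpace H]
    (C : Set H) (hCconv : Convex ℝ C) (f : H → ℝ) (f' : H → H)
    (hfgrad : ∀ z : H, HasGradientAt f (f' z) z) (L : ℝ) (hL : 0 < L)
    (hflip : ∀ z w : H, ‖f' z - f' w‖ ≤ L * ‖z - w‖) (p : H) (hp : p ∈ C)
    (hmin : ∀ y ∈ C, f p ≤ f y) (z : H) (hz : z ∈ C) : 0 ≤ ⟪f' p, z - p⟫ := by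
  by_contra hneg
  push Not at hneg
  set c := -⟪f' p, z - p⟫ with hc
  have hc0 : 0 < c := by linarith
  set X := L * ‖z - p‖ ^ 2 with hX
  have hX0 : 0 ≤ X := by positivity
  set t := c / (c + X + 1) with ht
  have ht0 : 0 < t := by positivity
  have ht1 : t ≤ 1 := by rw [ht, div_le_one (by positivity)]; linarith
  have h1 := hmin _ (hCconv.add_smul_sub_mem hp hz ⟨ht0.le, ht1⟩)
  have h2 := aux_descent f f' hfgrad L hflip p (t • (z - p))
  rw [real_inner_smul_right, norm_smul, Real.norm_eq_abs, abs_of_pos ht0] at h2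
  have h3 : t * c ≤ t * (t * X / 2) := by
    have : L / 2 * (t * ‖z - p‖) ^ 2 = t * (t * X / 2) := by rw [hX]; ring
    have : t * ⟪f' p, z - p⟫ = - (t * c) := by rw [hc]; ring
    linarith
  have h4 := le_of_mul_le_mul_left h3 ht0
  have h5 : t * (c + X + 1) = c := by rw [ht]; field_simp
  nlinarith

/-- weak convergence of the variable metric projected gradient algorithm
for constrained convex minimization. -/
theorem variable_metric_constrained_minimization_weak_convergence
    {H : Type*} [NormedAddCommGroup H] [InnerProductSpace ℝ H] [CompleteSpace H]
    (C : Set H) (hCne : C.Nonempty) (hCclosed : IsClosed C) (hCconv : Convex ℝ C)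
    (f : H → ℝ) (f' : H → H)
    (hfconv : ConvexOn ℝ Set.univ f)
    (hfgrad : ∀ z : H, HasGradientAt f (f' z) z)
    (L : ℝ) (hL : 0 < L)
    (hflip : ∀ z w : H, ‖f' z - f' w‖ ≤ L * ‖z - w‖)
    (β : ℝ) (hβ : β = 1 / L)
    (hΩ : {xs : H | xs ∈ C ∧ ∀ y ∈ C, f xs ≤ f y}.Nonempty)
    (α : ℝ) (hα : 0 < α) (μ : ℝ) (hμ : 0 < μ)
    (U V : ℕ → H →L[ℝ] H)
    (hU : ∀ k, IsSelfAdjoint (U k))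
    (hUpos : ∀ k, ∀ z : H, ⟪U k z, z⟫ ≥ α * ‖z‖ ^ 2)
    (hV : ∀ k, IsSelfAdjoint (V k))
    (hVU : ∀ k, (V k).comp (U k) = ContinuousLinearMap.id ℝ H)
    (hUV : ∀ k, (U k).comp (V k) = ContinuousLinearMap.id ℝ H)
    (hUnorm : ∀ k, ‖U k‖ ≤ μ)
    (η : ℕ → ℝ) (hη0 : ∀ k, 0 ≤ η k) (hηsum : Summable η)
    (hUmono : ∀ k, ∀ z : H, (1 + η k) * ⟪U (k + 1) z, z⟫ ≥ ⟪U k z, z⟫)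
    (γ lam αk : ℕ → ℝ)
    (hγ : ∀ k, 0 < γ k ∧ γ k < 2 * β / ‖U k‖)
    (hαk : ∀ k, αk k = 2 * β / (4 * β - γ k * ‖U k‖))
    (lamlb τ γlb : ℝ) (hlamlb : 0 < lamlb) (hτ : 0 < τ) (hγlb : 0 < γlb)
    (hlam : ∀ k, lamlb ≤ lam k ∧ lam k ≤ 1 / αk k - τ)
    (hγ' : ∀ k, γlb ≤ γ k)
    (a b : ℕ → H)
    (ha : Summable (fun k => lam k * ‖a k‖))
    (hb : Summable (fun k => lam k * ‖b k‖))
    (P : ℕ → H → H)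
    (hPmem : ∀ k, ∀ y : H, P k y ∈ C)
    (hPproj : ∀ k, ∀ y : H, ∀ z ∈ C, ⟪V k (y - P k y), z - P k y⟫ ≤ 0)
    (x : ℕ → H)
    (hx : ∀ k, x (k + 1) =
      x k + lam k • (P k (x k - γ k • U k (f' (x k) + b k)) + a k - x k)) :
    ∃ p ∈ {xs : H | xs ∈ C ∧ ∀ y ∈ C, f xs ≤ f y},
      ∀ y : H, Tendsto (fun k => ⟪x k, y⟫) atTop (nhds ⟪p, y⟫) := by
  have symU : ∀ k, ∀ z w : H, ⟪U k z, w⟫ = ⟪z, U k w⟫ := fun k =>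
    ContinuousLinearMap.isSelfAdjoint_iff_isSymmetric.1 (hU k)
  have symV : ∀ k, ∀ z w : H, ⟪V k z, w⟫ = ⟪z, V k w⟫ := fun k =>
    ContinuousLinearMap.isSelfAdjoint_iff_isSymmetric.1 (hV k)
  have hUVz : ∀ k z, U k (V k z) = z := fun k z => by
    simpa using congrArg (fun T : H →L[ℝ] H => T z) (hUV k)
  have hVUz : ∀ k z, V k (U k z) = z := fun k z => by
    simpa using congrArg (fun T : H →L[ℝ] H => T z) (hVU k)
  have hU0 : ∀ k z, 0 ≤ ⟪U k z, z⟫ := fun k z => le_trans (by positivity) (hUpos k z)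
  have hVq : ∀ k z, ⟪V k z, z⟫ = ⟪U k (V k z), V k z⟫ := fun k z => by
    rw [hUVz, real_inner_comm]
  have hV0 : ∀ k z, 0 ≤ ⟪V k z, z⟫ := fun k z => by rw [hVq]; exact hU0 k _
  have hVb : ∀ k z, ‖V k z‖ ≤ 1 / α * ‖z‖ := by
    intro k z
    have h1 := hUpos k (V k z)
    rw [hUVz] at h1
    have h2 := real_inner_le_norm z (V k z)
    rcases (norm_nonneg (V k z)).eq_or_lt with h | h
    · rw [← h]; positivity
    · rw [one_div, inv_mul_eq_div, le_div_iff₀ hα]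
      have h3 : ‖V k z‖ * (‖V k z‖ * α) ≤ ‖V k z‖ * ‖z‖ := by nlinarith
      exact le_of_mul_le_mul_left h3 h
  have hVn : ∀ k z, ‖z‖ ^ 2 ≤ ‖U k‖ * ⟪V k z, z⟫ := by
    intro k z
    have := aux_psd (U k) (symU k) (hU0 k) ‖U k‖ (norm_nonneg _) (fun z => (U k).le_opNorm z) (V k z)
    rw [← hVq, hUVz] at this
    exact this
  have hVμ : ∀ k z, ‖z‖ ^ 2 ≤ μ * ⟪V k z, z⟫ := fun k z =>
    (hVn k z).trans (mul_le_mul_of_nonneg_right (hUnorm k) (hV0 k z))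
  have hVm : ∀ k, ∀ z : H, ⟪V (k + 1) z, z⟫ ≤ (1 + η k) * ⟪V k z, z⟫ := fun k z =>
    aux_inv (U k) (V k) (U (k + 1)) (V (k + 1)) (symU k) (hU0 k) (hUVz k) (hUVz (k + 1))
      (η k) (hη0 k) (hUmono k) z
  have hUnpos : ∀ k, 0 < ‖U k‖ := by
    intro k
    rcases (norm_nonneg (U k)).eq_or_lt with h | h
    · have := hγ k
      rw [← h, div_zero] at this
      linarith [this.1, this.2]
    · exact h
  have hγU : ∀ k, γ k * ‖U k‖ < 2 / L := by
    intro k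
    have := (hγ k).2
    rw [lt_div_iff₀ (hUnpos k), hβ] at this
    calc _ < _ := this
      _ = _ := by ring
  have hlam2 : ∀ k, lam k ≤ 2 - γ k * ‖U k‖ * L / 2 - τ := by
    intro k
    have := (hlam k).2
    have e : 1 / αk k = 2 - γ k * ‖U k‖ * L / 2 := by
      rw [hαk, one_div_div, hβ]
      field_simp
      ring
    rwa [e] at this
  have hlam0 : ∀ k, 0 < lam k := fun k => hlamlb.trans_le (hlam k).1
  -- the exact step and the error
  set q : ℕ → H := fun k => P k (x k - γ k • U k (f' (x k))) with hq
  set e : ℕ → H := fun k => lam k • (P k (x k - γ k • U k (f' (x k) + b k)) - q k + a k) with he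
  have hxe : ∀ k, x (k + 1) = x k + lam k • (q k - x k) + e k := by
    intro k
    rw [hx k]
    simp only [he]
    module
  have hPlip : ∀ k y z, ‖P k y - P k z‖ ≤ μ / α * ‖y - z‖ := by
    intro k y z
    have h1 := hPproj k y (P k z) (hPmem k z)
    have h2 := hPproj k z (P k y) (hPmem k y)
    have h3 : ⟪V k (P k y - P k z), P k y - P k z⟫ ≤ ⟪V k (y - z), P k y - P k z⟫ := by
      simp only [map_sub, inner_sub_left, inner_sub_right] at h1 h2 ⊢
      linarith
    have h4 := hVμ k (P k y - P k z)
    have h5 := real_inner_le_norm (V k (y - z)) (P k y - P k z)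
    have h6 := mul_le_mul_of_nonneg_right (hVb k (y - z)) (norm_nonneg (P k y - P k z))
    rcases (norm_nonneg (P k y - P k z)).eq_or_lt with h | h
    · rw [← h]; positivity
    · have h7 : μ * ⟪V k (P k y - P k z), P k y - P k z⟫ ≤ μ * (1 / α * ‖y - z‖ * ‖P k y - P k z‖) := by
        apply mul_le_mul_of_nonneg_left _ hμ.le
        linarith
      have h8 : ‖P k y - P k z‖ * ‖P k y - P k z‖ ≤ ‖P k y - P k z‖ * (μ / α * ‖y - z‖) := by
        calc _ = ‖P k y - P k z‖ ^ 2 := by ring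
          _ ≤ _ := h4.trans h7
          _ = _ := by ring
      exact le_of_mul_le_mul_left h8 h
  have heb : ∀ k, ‖e k‖ ≤ lam k * ‖a k‖ + μ / α * (2 / L) * (lam k * ‖b k‖) := by
    intro k
    have h1 := hPlip k (x k - γ k • U k (f' (x k) + b k)) (x k - γ k • U k (f' (x k)))
    have e1 : (x k - γ k • U k (f' (x k) + b k)) - (x k - γ k • U k (f' (x k))) = - (γ k • U k (b k)) := by
      rw [map_add]; module
    rw [e1, norm_neg, norm_smul, Real.norm_eq_abs, abs_of_pos (hγ k).1] at h1
    have h2 : γ k * ‖U k (b k)‖ ≤ 2 / L * ‖b k‖ := by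
      calc _ ≤ γ k * (‖U k‖ * ‖b k‖) := mul_le_mul_of_nonneg_left ((U k).le_opNorm _) (hγ k).1.le
        _ = (γ k * ‖U k‖) * ‖b k‖ := by ring
        _ ≤ _ := mul_le_mul_of_nonneg_right (hγU k).le (norm_nonneg _)
    have h3 : μ / α * (γ k * ‖U k (b k)‖) ≤ μ / α * (2 / L * ‖b k‖) :=
      mul_le_mul_of_nonneg_left h2 (by positivity)
    simp only [he]
    rw [norm_smul, Real.norm_eq_abs, abs_of_pos (hlam0 k)]
    have h4 := norm_add_le (P k (x k - γ k • U k (f' (x k) + b k)) - q k) (a k)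
    calc _ ≤ lam k * (μ / α * (2 / L * ‖b k‖) + ‖a k‖) := by
          apply mul_le_mul_of_nonneg_left _ (hlam0 k).le
          linarith
      _ = _ := by ring
  have hεs : Summable (fun k => ‖e k‖) :=
    Summable.of_nonneg_of_le (fun k => norm_nonneg _) heb (ha.add (hb.mul_left _))
  set E := ∑' k, ‖e k‖ with hE
  set N := ∑' k, η k with hN
  have hEk : ∀ k, ‖e k‖ ≤ E := fun k => hεs.le_tsum k (fun j _ => norm_nonneg _)
  have hNk : ∀ k, η k ≤ N := fun k => hηsum.le_tsum k (fun j _ => hη0 j)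
  have hE0 : 0 ≤ E := (norm_nonneg _).trans (hEk 0)
  have hN0 : 0 ≤ N := (hη0 0).trans (hNk 0)
  set s : ℕ → ℝ := fun k => η k + (1 + N) * (μ / α) * ‖e k‖ with hs
  set δ : ℕ → ℝ := fun k => (1 + N) * (1 + E) / α * ‖e k‖ with hδ
  have hs0 : ∀ k, 0 ≤ s k := fun k => by have := hη0 k; simp only [hs]; positivity
  have hδ0 : ∀ k, 0 ≤ δ k := fun k => by simp only [hδ]; positivity
  have hss : Summable s := hηsum.add (hεs.mul_left _)
  have hδs : Summable δ := hεs.mul_left _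
  have fejer : ∀ p : H, p ∈ C → (∀ y ∈ C, f p ≤ f y) → ∀ k,
      ⟪V (k + 1) (x (k + 1) - p), x (k + 1) - p⟫ + lamlb * τ * ⟪V k (x k - q k), x k - q k⟫
      ≤ (1 + s k) * ⟪V k (x k - p), x k - p⟫ + δ k := by
    intro p hp hmin k
    have h1 := aux_step (U k) (V k) (symV k) (hVUz k) ‖U k‖ (hVn k) L (γ k) (lam k) τ lamlb hL
      (hγ k).1 hlamlb hτ (hlam k).1 (hlam2 k) (x k) (q k) p (f' (x k)) (f' p) (hV0 k _)
      (hPproj k _ p hp)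
      (aux_opt C hCconv f f' hfgrad L hL hflip p hp hmin (q k) (hPmem k _))
      (aux_coco f f' hfconv hfgrad L hL hflip (x k) p)
    set y := x k + lam k • (q k - x k) - p with hy
    have e1 : x (k + 1) - p = y + e k := by rw [hxe, hy]; abel
    have h2 := hVm k (x (k + 1) - p)
    have e2 : ⟪V k (x (k + 1) - p), x (k + 1) - p⟫ = ⟪V k y, y⟫ + 2 * ⟪V k y, e k⟫ + ⟪V k (e k), e k⟫ := by
      rw [e1]
      simp only [map_add, inner_add_left, inner_add_right]
      rw [symV k (e k) y, real_inner_comm (V k y) (e k)]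
      ring
    have h3 : 2 * ⟪V k y, e k⟫ ≤ ‖e k‖ / α * (1 + μ * ⟪V k y, y⟫) := by
      have g1 := real_inner_le_norm (V k y) (e k)
      have g2 := mul_le_mul_of_nonneg_right (hVb k y) (norm_nonneg (e k))
      have g3 := hVμ k y
      have g4 : 2 * ‖y‖ ≤ 1 + μ * ⟪V k y, y⟫ := by nlinarith [sq_nonneg (‖y‖ - 1)]
      have g5 := mul_le_mul_of_nonneg_left g4 (show 0 ≤ ‖e k‖ / α by positivity)
      have g6 : ‖e k‖ / α * (2 * ‖y‖) = 2 * (1 / α * ‖y‖ * ‖e k‖) := by ring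
      linarith
    have h4 : ⟪V k (e k), e k⟫ ≤ ‖e k‖ / α * E := by
      have g1 := real_inner_le_norm (V k (e k)) (e k)
      have g2 := mul_le_mul_of_nonneg_right (hVb k (e k)) (norm_nonneg (e k))
      have g5 := mul_le_mul_of_nonneg_left (hEk k) (show 0 ≤ ‖e k‖ / α by positivity)
      have g6 : ‖e k‖ / α * ‖e k‖ = 1 / α * ‖e k‖ * ‖e k‖ := by ring
      linarith
    have hy0 := hV0 k y
    have hr0 := hV0 k (x k - q k)
    have hcr : 0 ≤ lamlb * τ * ⟪V k (x k - q k), x k - q k⟫ := by positivity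
    rw [e2] at h2
    set A := ⟪V k y, y⟫
    set D := ⟪V k (x k - p), x k - p⟫
    set r := lamlb * τ * ⟪V k (x k - q k), x k - q k⟫
    have h5 : ⟪V (k + 1) (x (k + 1) - p), x (k + 1) - p⟫ ≤
        (1 + η k) * (A + ‖e k‖ / α * (1 + μ * A) + ‖e k‖ / α * E) := by
      refine h2.trans (mul_le_mul_of_nonneg_left ?_ (by linarith [hη0 k]))
      linarith
    have h6 : (1 + η k) * (A + ‖e k‖ / α * (1 + μ * A) + ‖e k‖ / α * E) =
        (1 + η k) * A + (1 + η k) * (‖e k‖ / α * (1 + μ * A + E)) := by ring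
    have h7 : (1 + η k) * (‖e k‖ / α * (1 + μ * A + E)) ≤ (1 + N) * (‖e k‖ / α * (1 + μ * A + E)) := by
      apply mul_le_mul_of_nonneg_right _ (by positivity)
      linarith [hNk k]
    have h8 : (1 + η k) * A + (1 + N) * (‖e k‖ / α * (1 + μ * A + E)) = (1 + s k) * A + δ k := by
      simp only [hs, hδ]; ring
    have h9 : (1 + s k) * A ≤ (1 + s k) * (D - r) :=
      mul_le_mul_of_nonneg_left h1 (by linarith [hs0 k])
    have h10 : 0 ≤ s k * r := mul_nonneg (hs0 k) hcr
    nlinarith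
  have hDconv : ∀ p : H, p ∈ C → (∀ y ∈ C, f p ≤ f y) →
      ∃ l, Tendsto (fun k => ⟪V k (x k - p), x k - p⟫) atTop (nhds l) := by
    intro p hp hmin
    refine aux_conv _ s δ (fun k => hV0 k _) hs0 hδ0 hss hδs (fun k => ?_)
    have h1 := fejer p hp hmin k
    have h2 : 0 ≤ lamlb * τ * ⟪V k (x k - q k), x k - q k⟫ := by
      have := hV0 k (x k - q k)
      positivity
    linarith
  obtain ⟨p0, hp0, hmin0⟩ := hΩ
  obtain ⟨l0, hl0⟩ := hDconv p0 hp0 hmin0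
  obtain ⟨R, hR⟩ : ∃ R, ∀ k, ‖x k‖ ≤ R := by
    obtain ⟨M, hM⟩ := hl0.bddAbove_range
    refine ⟨(1 + μ * M) + ‖p0‖, fun k => ?_⟩
    have h1 : ⟪V k (x k - p0), x k - p0⟫ ≤ M := hM ⟨k, rfl⟩
    have h2 := hVμ k (x k - p0)
    have h3 := mul_le_mul_of_nonneg_left h1 hμ.le
    have h4 : ‖x k - p0‖ ≤ 1 + μ * M := by nlinarith [sq_nonneg (‖x k - p0‖ - 1), sq_nonneg (‖x k - p0‖)]
    have h5 := norm_sub_norm_le (x k) p0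
    linarith
  have hR0 : 0 ≤ R := (norm_nonneg _).trans (hR 0)
  have hn : Tendsto (fun k => ‖x k - q k‖) atTop (nhds 0) := by
    have h1 : Tendsto (fun k => μ / (lamlb * τ) * ((1 + s k) * ⟪V k (x k - p0), x k - p0⟫ + δ k -
        ⟪V (k + 1) (x (k + 1) - p0), x (k + 1) - p0⟫)) atTop (nhds (μ / (lamlb * τ) * ((1 + 0) * l0 + 0 - l0))) := by
      apply Tendsto.const_mul
      exact (((hss.tendsto_atTop_zero.const_add 1).mul hl0).add hδs.tendsto_atTop_zero).sub
        ((tendsto_add_atTop_iff_nat 1).2 hl0)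
    have e1 : μ / (lamlb * τ) * ((1 + 0) * l0 + 0 - l0) = 0 := by ring
    rw [e1] at h1
    have h2 : Tendsto (fun k => ‖x k - q k‖ ^ 2) atTop (nhds 0) := by
      refine squeeze_zero (fun k => sq_nonneg _) (fun k => ?_) h1
      have g1 := fejer p0 hp0 hmin0 k
      have g2 := hVμ k (x k - q k)
      have g3 : lamlb * τ * ⟪V k (x k - q k), x k - q k⟫ ≤ (1 + s k) * ⟪V k (x k - p0), x k - p0⟫ + δ k -
        ⟪V (k + 1) (x (k + 1) - p0), x (k + 1) - p0⟫ := by linarith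
      calc _ ≤ _ := g2
        _ = μ / (lamlb * τ) * (lamlb * τ * ⟪V k (x k - q k), x k - q k⟫) := by field_simp
        _ ≤ _ := mul_le_mul_of_nonneg_left g3 (by positivity)
    have h3 := h2.sqrt
    simpa [Real.sqrt_sq (norm_nonneg _)] using h3
  -- cluster points are solutions
  have hclus : ∀ F : Ultrafilter ℕ, (F : Filter ℕ) ≤ atTop → ∀ p : H,
      (∀ y, Tendsto (fun k => ⟪x k, y⟫) F (nhds ⟪p, y⟫)) → p ∈ C ∧ ∀ y ∈ C, f p ≤ f y := by
    intro F hF p hp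
    have hnF : Tendsto (fun k => ‖x k - q k‖) F (nhds 0) := hn.mono_left hF
    have hqF : ∀ y, Tendsto (fun k => ⟪q k, y⟫) F (nhds ⟪p, y⟫) := by
      intro y
      have h1 : Tendsto (fun k => ⟪x k - q k, y⟫) F (nhds 0) := by
        apply squeeze_zero_norm (a := fun k => ‖x k - q k‖ * ‖y‖)
        · intro k; exact norm_inner_le_norm _ _
        · simpa using hnF.mul_const ‖y‖
      have h2 := (hp y).sub h1
      simp only [sub_zero] at h2
      refine h2.congr fun k => ?_
      rw [inner_sub_left]; ring
    constructor
    · by_contra hpC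
      obtain ⟨g, u, hg1, hg2⟩ := geometric_hahn_banach_point_closed hCconv hCclosed hpC
      have h1 := hqF ((InnerProductSpace.toDual ℝ H).symm g)
      have e1 : ∀ z : H, ⟪z, (InnerProductSpace.toDual ℝ H).symm g⟫ = g z := fun z => by
        rw [real_inner_comm, InnerProductSpace.toDual_symm_apply]
      simp only [e1] at h1
      have := ge_of_tendsto' h1 (fun k => (hg2 (q k) (hPmem k _)).le)
      linarith
    · intro z hz
      have hlim : Tendsto (fun k => f p + (⟪x k, f' p⟫ - ⟪p, f' p⟫) -
          1 / γlb * (1 / α * ‖x k - q k‖ * (‖z‖ + R + ‖x k - q k‖)) - (‖f' 0‖ + L * R) * ‖x k - q k‖) F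
          (nhds (f p + (⟪p, f' p⟫ - ⟪p, f' p⟫) -
          1 / γlb * (1 / α * 0 * (‖z‖ + R + 0)) - (‖f' 0‖ + L * R) * 0)) :=
        (((((hp (f' p)).sub_const _).const_add _).sub
          (((hnF.const_mul _).mul (hnF.const_add _)).const_mul _)).sub (hnF.const_mul _))
      have e0 : f p + (⟪p, f' p⟫ - ⟪p, f' p⟫) -
          1 / γlb * (1 / α * 0 * (‖z‖ + R + 0)) - (‖f' 0‖ + L * R) * 0 = f p := by ring
      rw [e0] at hlim
      refine le_of_tendsto' hlim fun k => ?_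
      have h1 := aux_grad_ineq f f' hfconv hfgrad (x k) z
      have h2 := aux_grad_ineq f f' hfconv hfgrad p (x k)
      have h3 := hPproj k (x k - γ k • U k (f' (x k))) z hz
      change ⟪V k (x k - γ k • U k (f' (x k)) - q k), z - q k⟫ ≤ 0 at h3
      have e1 : V k (x k - γ k • U k (f' (x k)) - q k) = V k (x k - q k) - γ k • f' (x k) := by
        simp only [map_sub, map_smul, hVUz]; abel
      rw [e1, inner_sub_left, real_inner_smul_left] at h3
      have e2 : ⟪f' (x k), z - x k⟫ = ⟪f' (x k), z - q k⟫ - ⟪f' (x k), x k - q k⟫ := by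
        simp only [inner_sub_right]; ring
      have e3 : ⟪f' p, x k - p⟫ = ⟪x k, f' p⟫ - ⟪p, f' p⟫ := by
        rw [real_inner_comm, inner_sub_left]
      have h4 : ⟪f' (x k), x k - q k⟫ ≤ (‖f' 0‖ + L * R) * ‖x k - q k‖ := by
        refine (real_inner_le_norm _ _).trans (mul_le_mul_of_nonneg_right ?_ (norm_nonneg _))
        have g1 := hflip (x k) 0
        rw [sub_zero] at g1
        have g2 := norm_sub_norm_le (f' (x k)) (f' 0)
        have g3 := mul_le_mul_of_nonneg_left (hR k) hL.le
        linarith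
      set B := 1 / α * ‖x k - q k‖ * (‖z‖ + R + ‖x k - q k‖) with hB
      have hB0 : 0 ≤ B := by positivity
      have h5 : -B ≤ ⟪V k (x k - q k), z - q k⟫ := by
        have g1 := (abs_le.1 (abs_real_inner_le_norm (V k (x k - q k)) (z - q k))).1
        have g2 : ‖z - q k‖ ≤ ‖z‖ + R + ‖x k - q k‖ := by
          have : z - q k = z - x k + (x k - q k) := by abel
          rw [this]
          have i1 := norm_add_le (z - x k) (x k - q k)
          have i2 := norm_sub_le z (x k)
          linarith [hR k]
        have g3 : ‖V k (x k - q k)‖ * ‖z - q k‖ ≤ B :=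
          mul_le_mul (hVb k _) g2 (norm_nonneg _) (by positivity)
        linarith
      have h6 : -(1 / γlb * B) ≤ ⟪f' (x k), z - q k⟫ := by
        have g1 : -B ≤ γ k * ⟪f' (x k), z - q k⟫ := by linarith
        by_contra hcon
        push Not at hcon
        have g2 := mul_lt_mul_of_pos_left hcon (hγ k).1
        have g3 : B ≤ γ k * (1 / γlb * B) := by
          have : γlb * (1 / γlb * B) ≤ γ k * (1 / γlb * B) :=
            mul_le_mul_of_nonneg_right (hγ' k) (by positivity)
          have e : γlb * (1 / γlb * B) = B := by field_simp
          linarith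
        linarith
      linarith
  -- uniqueness of cluster points
  have huniq : ∀ F G : Ultrafilter ℕ, (F : Filter ℕ) ≤ atTop → (G : Filter ℕ) ≤ atTop → ∀ p p' : H,
      (∀ y, Tendsto (fun k => ⟪x k, y⟫) F (nhds ⟪p, y⟫)) →
      (∀ y, Tendsto (fun k => ⟪x k, y⟫) G (nhds ⟪p', y⟫)) → p = p' := by
    intro F G hF hG p p' hp hp'
    obtain ⟨hpC, hpm⟩ := hclus F hF p hp
    obtain ⟨hpC', hpm'⟩ := hclus G hG p' hp'
    obtain ⟨l1, hl1⟩ := hDconv p hpC hpm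
    obtain ⟨l2, hl2⟩ := hDconv p' hpC' hpm'
    have strong := aux_strong V symV (1 / α) (by positivity) hVb η hη0 hηsum hVm
    obtain ⟨v, hv⟩ := strong (p - p')
    obtain ⟨v1, hv1⟩ := strong p
    obtain ⟨v2, hv2⟩ := strong p'
    have hvp := hv1.inner (tendsto_const_nhds (x := p)) (𝕜 := ℝ)
    have hvp' := hv2.inner (tendsto_const_nhds (x := p')) (𝕜 := ℝ)
    have hlim := (((hl2.sub hl1).add hvp).sub hvp').div_const 2
    have hlim2 : Tendsto (fun k => ⟪x k, V k (p - p')⟫) atTop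
        (nhds ((l2 - l1 + ⟪v1, p⟫ - ⟪v2, p'⟫) / 2)) := by
      refine hlim.congr fun k => ?_
      simp only [map_sub, inner_sub_left, inner_sub_right]
      rw [real_inner_comm p (V k (x k)), real_inner_comm p' (V k (x k)),
        ← symV k (x k) p, ← symV k (x k) p', symV k p (x k), symV k p' (x k),
        real_inner_comm p (V k (x k)), real_inner_comm p' (V k (x k))]
      ring
    have herr : Tendsto (fun k => ⟪x k, V k (p - p') - v⟫) atTop (nhds 0) := by
      apply squeeze_zero_norm (a := fun k => R * ‖V k (p - p') - v‖)
      · intro k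
        exact (norm_inner_le_norm _ _).trans (mul_le_mul_of_nonneg_right (hR k) (norm_nonneg _))
      · have : Tendsto (fun k => ‖V k (p - p') - v‖) atTop (nhds 0) := by
          simpa using (hv.sub_const v).norm
        simpa using this.const_mul R
    have hlim3 : Tendsto (fun k => ⟪x k, v⟫) atTop
        (nhds ((l2 - l1 + ⟪v1, p⟫ - ⟪v2, p'⟫) / 2)) := by
      have := hlim2.sub herr
      rw [sub_zero] at this
      refine this.congr fun k => ?_
      rw [inner_sub_right]; ring
    have u1 := tendsto_nhds_unique (hp v) (hlim3.mono_left hF)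
    have u2 := tendsto_nhds_unique (hp' v) (hlim3.mono_left hG)
    have u3 : ⟪v, p - p'⟫ = 0 := by
      rw [real_inner_comm, inner_sub_left, u1, u2, sub_self]
    have hvd := (hv.inner (tendsto_const_nhds (x := p - p')) (𝕜 := ℝ)).const_mul μ
    have u4 := ge_of_tendsto' hvd (fun k => hVμ k (p - p'))
    rw [u3, mul_zero] at u4
    have u5 : ‖p - p'‖ = 0 := by
      have := norm_nonneg (p - p')
      nlinarith
    exact sub_eq_zero.1 (norm_eq_zero.1 u5)
  obtain ⟨p, hp⟩ := aux_weak_cpt x R hR (Ultrafilter.of atTop)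
  refine ⟨p, hclus _ (Ultrafilter.of_le _) p hp, fun y => ?_⟩
  rw [tendsto_iff_ultrafilter]
  intro G hG
  obtain ⟨p', hp'⟩ := aux_weak_cpt x R hR G
  have := huniq _ G (Ultrafilter.of_le _) hG p p' hp hp'
  rw [this]
  exact hp' y
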